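/- Let K be a field whose characteristic is 0 or a prime p ≠ 2, and let l ≥ 2. Then for any two K-subspaces U and V of the symplectic Lie algebra sp_{2l}(K) one has 2·codim [U,V] ≤ 3·(codim U + codim V), where codimensions are taken inside sp_{2l}(K) (of dimension 2l²+l). -/

import Mathlib

/-!
The proof degenerates `U`, `V` and `[U, V]` to their leading terms for the root grading and then
counts root triples.

Write `I = Fin l ⊕ Fin l` for the set of weights `±ε₁, …, ±ε_l` of the natural representation, with
`Sum.swap` as negation. The matrices `J * x`, `x ∈ sp`, are exactly the symmetric ones, so `sp` has
coordinates indexed by `Sym2 I`, and the coordinate `s(i, j)` has weight `wt i + wt j`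
(`coord`, `deg`). Weights are compared lexicographically. An index `t` is *leading* in a subspace
`W` if some element of `W` is a nonzero multiple of the basis vector at `t` plus terms of strictly
smaller weight. The number of leading indices is at most `dim W` (`card_le_finrank`), and
`codim W` is at least the number of roots that are not leading (`finrank_add_card_le`, using that
root spaces are one-dimensional).

If `s(j, i)` is leading in `U` and `s(-i, m)` is leading in `V`, both being roots, then `s(j, m)` is
leading in `[U, V]`, provided that it is a root or `i = j` (`isLead_lie`); this is where
characteristic `≠ 2` enters. So every non-leading `s(j, m)` of `[U, V]` forces, for each admissible
`i`, a non-leading root of `U` or of `V`.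

Let `r₀, r_L, r_S` be the numbers of non-leading indices of `[U, V]` of weight zero, long and short,
and `x_L, x_S` the numbers of long and short non-leading roots of `U` and `V` together. Double
counting gives, with `n = 2l`,
`2 r₀ ≤ x_L`, `(n - 2) r_L ≤ 2 x_S`, `4 r_S ≤ (n - 2) x_L + 2 x_S` and `r_S ≤ x_S` if `n > 4`.
For `n = 4` the first three, and for `n ≥ 6` the first, second and fourth, add up to
`2 (r₀ + r_L + r_S) ≤ 3 (x_L + x_S)` (`counting`).
-/

/-- The span of all brackets `⁅u, v⁆` with `u ∈ U`, `v ∈ V`. -/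
def bracketSpan {K L : Type*} [Field K] [LieRing L] [LieAlgebra K L]
    (U V : Submodule K L) : Submodule K L :=
  Submodule.span K {z | ∃ u ∈ U, ∃ v ∈ V, ⁅u, v⁆ = z}

/-- The codimension of a subspace `W` of `L`: `dim L - dim W`. -/
noncomputable def codim (K : Type*) {L : Type*} [Field K] [AddCommGroup L] [Module K L]
    (W : Submodule K L) : ℕ :=
  Module.finrank K L - Module.finrank K ↥W

/-! ### Leading indices of a subspace -/

section
variable {K L T Γ : Type*} [Field K] [AddCommGroup L] [Module K L] [Fintype T] [LinearOrder Γ]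

/-- The index `t` is leading in `U`: some `u ∈ U` has nonzero coordinate at `t`, and its coordinates
at all other indices of degree at least `deg t` vanish. The degree need not be injective; other
indices of the same degree as `t` are excluded from the support of `u`. -/
def IsLead (e : L ≃ₗ[K] (T → K)) (deg : T → Γ) (U : Submodule K L) (t : T) : Prop :=
  ∃ u ∈ U, e u t ≠ 0 ∧ ∀ s, deg t ≤ deg s → s ≠ t → e u s = 0

/-- Elements of `X` with distinct leading indices are linearly independent. -/
theorem card_le_finrank (e : L ≃ₗ[K] (T → K)) (deg : T → Γ) (X : Submodule K L)
    (S : Finset T) (hS : ∀ t ∈ S, IsLead e deg X t) : S.card ≤ Module.finrank K X := by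
  classical
  have : FiniteDimensional K L := e.symm.finiteDimensional
  choose u huX hut hus using fun t : S => hS t t.2
  have hli : LinearIndependent K (fun t : S => (⟨u t, huX t⟩ : X)) := by
    rw [Fintype.linearIndependent_iff]
    intro c hc
    by_contra! hne
    obtain ⟨t, ht, hmax⟩ := Finset.exists_max_image (Finset.univ.filter fun t : S => c t ≠ 0)
      (fun t => deg t) (by obtain ⟨t, ht⟩ := hne; exact ⟨t, by simpa using ht⟩)
    simp only [Finset.mem_filter, Finset.mem_univ, true_and] at ht hmax
    have h0 : ∑ s : S, c s • u s = 0 := by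
      simpa using congrArg (Submodule.subtype X) hc
    have h1 : ∑ s : S, c s * e (u s) t = 0 := by
      simpa using congrFun (congrArg e h0) (t : T)
    rw [Finset.sum_eq_single t] at h1
    · exact (mul_ne_zero ht (hut t)) h1
    · intro s _ hst
      by_cases hcs : c s = 0
      · simp [hcs]
      · rw [hus s t (hmax s hcs) (fun h => hst (Subtype.ext h.symm)), mul_zero]
    · simp
  simpa using hli.fintype_card_le_finrank

/-- The coordinates outside a set `S` of non-leading indices determine an element of `U`: otherwise
a difference would have its index of largest degree in `S`. Uniqueness of the degrees
in `S` makes that index leading. -/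
theorem finrank_add_card_le (e : L ≃ₗ[K] (T → K)) (deg : T → Γ) (U : Submodule K L)
    (S : Finset T) (hS : ∀ t ∈ S, ¬ IsLead e deg U t)
    (huniq : ∀ t ∈ S, ∀ s, deg s = deg t → s = t) :
    Module.finrank K U + S.card ≤ Fintype.card T := by
  classical
  have : FiniteDimensional K L := e.symm.finiteDimensional
  let φ : U →ₗ[K] ((Sᶜ : Finset T) → K) :=
    (LinearMap.funLeft K K ((↑) : (Sᶜ : Finset T) → T)) ∘ₗ e.toLinearMap ∘ₗ U.subtype
  have hφ : Function.Injective φ := by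
    rw [injective_iff_map_eq_zero]
    intro u hu
    by_contra hne
    have hex : ∃ t, e u t ≠ 0 := by
      by_contra! h
      exact hne (Subtype.ext (e.injective (by ext t; simpa using h t)))
    obtain ⟨t, ht, hmax⟩ := Finset.exists_max_image (Finset.univ.filter fun t => e u t ≠ 0)
      deg (by obtain ⟨t, ht⟩ := hex; exact ⟨t, by simpa using ht⟩)
    simp only [Finset.mem_filter, Finset.mem_univ, true_and] at ht hmax
    have htS : t ∈ S := by
      by_contra h
      exact ht (congrFun hu ⟨t, by simpa using h⟩)
    refine hS t htS ⟨u, u.2, ht, fun s hs hst => ?_⟩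
    by_contra h
    exact hst (huniq t htS s (le_antisymm (hmax s h) hs))
  have h := LinearMap.finrank_le_finrank_of_injective hφ
  rw [Module.finrank_fintype_fun_eq_card, Fintype.card_coe, Finset.card_compl] at h
  have := Finset.card_le_univ S
  omega
end

/-! ### Counting over unordered pairs -/

theorem two_mul_sum_sym2 {I : Type*} [Fintype I] [DecidableEq I] (f : Sym2 I → ℕ) :
    2 * ∑ z, f z = ∑ j, ∑ m, f s(j, m) + ∑ j, f s(j, j) := by
  rw [← Fintype.sum_prod_type',
    ← Finset.sum_fiberwise (s := Finset.univ) (fun x : I × I => s(x.1, x.2)),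
    ← Finset.sum_fiberwise (s := Finset.univ) (fun x : I => s(x, x)),
    ← Finset.sum_add_distrib, Finset.mul_sum]
  refine Finset.sum_congr rfl fun z _ => ?_
  induction z with | _ a b
  rw [Finset.sum_congr rfl (g := fun _ => f s(a, b))
      (fun x hx => by simp only [Finset.mem_filter] at hx; rw [hx.2]),
    Finset.sum_congr (s₁ := Finset.univ.filter fun x : I => s(x, x) = s(a, b)) rfl
      (g := fun _ => f s(a, b))
      (fun x hx => by simp only [Finset.mem_filter] at hx; rw [hx.2])]
  rw [Finset.sum_const, Finset.sum_const, ← add_smul, smul_eq_mul]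
  congr 1
  have h1 : (Finset.univ.filter fun x : I × I => s(x.1, x.2) = s(a, b)) = {(a, b), (b, a)} := by
    ext ⟨x, y⟩; simp
  by_cases hab : a = b
  · subst hab
    have h2 : (Finset.univ.filter fun x : I => s(x, x) = s(a, a)) = {a} := by
      ext x; simp
    rw [h1, h2]; simp
  · have h2 : (Finset.univ.filter fun x : I => s(x, x) = s(a, b)) = ∅ := by
      ext x; simp; grind
    rw [h1, h2, Finset.card_pair (by simp; grind)]; simp

section
variable {I : Type*} [Fintype I] [DecidableEq I]

/-- The counting argument. Here `b` is negation on the set `I` of weights, and `p`, `q`, `r` are to be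
read as the indicator functions of the non-leading indices of `U`, `V` and `[U, V]`, as functions of
ordered pairs. For such an indicator `f` of a set, the expression `∑ j, ∑ m, f j m + ∑ j, f j j` is
twice the cardinality of the set. -/
theorem counting (b : Equiv.Perm I) (hb : ∀ i, b (b i) = i) (hfix : ∀ i, b i ≠ i)
    (hI : 4 ≤ Fintype.card I) (p q r : I → I → ℕ)
    (hqs : ∀ i j, q i j = q j i)
    (hrule : ∀ j i m, i ≠ b j → m ≠ i → (m ≠ b j ∨ i = j) → r j m ≤ p j i + q (b i) m) :
    2 * (∑ j, ∑ m, r j m + ∑ j, r j j) ≤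
      3 * ((∑ j, ∑ m, p j m + ∑ j, p j j) + (∑ j, ∑ m, q j m + ∑ j, q j j)) := by
  -- `A j m` says that the pair `(j, m)` is a short root.
  let A : I → I → Prop := fun j m => m ≠ j ∧ m ≠ b j
  have hAs : ∀ j m, A j m ↔ A m j := fun j m => by simp only [A]; grind
  have hAb : ∀ j m, A j (b m) ↔ A j m := fun j m => by simp only [A]; grind
  have hAb' : ∀ j m, A (b j) m ↔ A j m := fun j m => by rw [hAs, hAb, hAs]
  have hcard2 : ∀ j, (Finset.univ.filter (A j)).card = Fintype.card I - 2 := fun j => by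
    have : Finset.univ.filter (A j) = {j, b j}ᶜ := by ext; simp [A]
    rw [this, Finset.card_compl, Finset.card_pair (hfix j).symm]
  have hcard4 : ∀ j m, A j m →
      (Finset.univ.filter fun i => A j i ∧ A m i).card = Fintype.card I - 4 := fun j m h => by
    have : (Finset.univ.filter fun i => A j i ∧ A m i) = {j, b j, m, b m}ᶜ := by
      ext; simp [A]; tauto
    have h4 : ({j, b j, m, b m} : Finset I).card = 4 := by
      simp only [A] at h
      have := hfix j
      have := hfix m
      have := hb j
      rw [Finset.card_insert_of_notMem, Finset.card_insert_of_notMem, Finset.card_pair] <;> grind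
    rw [this, Finset.card_compl, h4]
  -- `S f` is the sum of `f` over ordered pairs representing short roots.
  let S : (I → I → ℕ) → ℕ := fun f => ∑ j, ∑ m, if A j m then f j m else 0
  have hsplit : ∀ f : I → I → ℕ,
      ∑ j, ∑ m, f j m = ∑ j, f j j + ∑ j, f j (b j) + S f := fun f => by
    simp only [S, ← Finset.sum_add_distrib]
    refine Finset.sum_congr rfl fun j _ => ?_
    rw [← Finset.sum_filter, ← Finset.sum_filter_add_sum_filter_not Finset.univ (A j), add_comm]
    congr 1
    have : (Finset.univ.filter fun m => ¬ A j m) = {j, b j} := by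
      ext; simp [A]; tauto
    rw [this, Finset.sum_pair (hfix j).symm]
  have hS_swap : ∀ f : I → I → ℕ, S (fun j m => f m j) = S f := fun f => by
    simp only [S]
    rw [Finset.sum_comm]
    simp only [hAs]
  have hS_bar : ∀ f : I → I → ℕ, S (fun j m => f j (b m)) = S f := fun f => by
    simp only [S]
    refine Finset.sum_congr rfl fun j _ => ?_
    rw [← Equiv.sum_comp b (fun m => if A j m then f j m else 0)]
    simp only [hAb]
  have hS_bar' : ∀ f : I → I → ℕ, S (fun j m => f (b j) m) = S f := fun f => by
    rw [← hS_swap, hS_bar (fun m j => f j m), hS_swap]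
  have hS_mono : ∀ f g : I → I → ℕ, (∀ j m, A j m → f j m ≤ g j m) → S f ≤ S g := by
    intro f g h
    refine Finset.sum_le_sum fun j _ => Finset.sum_le_sum fun m _ => ?_
    split_ifs with hA
    · exact h j m hA
    · rfl
  have hS_add : ∀ f g : I → I → ℕ, S (fun j m => f j m + g j m) = S f + S g := by
    intro f g
    simp only [S, ← Finset.sum_add_distrib]
    refine Finset.sum_congr rfl fun j _ => Finset.sum_congr rfl fun m _ => ?_
    split_ifs <;> rfl
  have hS_diag : ∀ f : I → ℕ, S (fun j _ => f j) = (Fintype.card I - 2) * ∑ j, f j := by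
    intro f
    simp only [S, ← Finset.sum_filter, Finset.sum_const, hcard2, smul_eq_mul, Finset.mul_sum]
  have hS_q : S (fun j m => q (b m) j) = S q := by
    rw [hS_bar (fun j m => q m j), hS_swap]
  -- Weight zero: `hrule` with `i = j`, an opposite pair of long roots.
  have h0 : ∑ j, r j (b j) ≤ ∑ j, p j j + ∑ j, q j j := by
    rw [← Equiv.sum_comp b (fun j => q j j), ← Finset.sum_add_distrib]
    exact Finset.sum_le_sum fun j _ => hrule j j (b j) (hfix j).symm (hfix j) (Or.inr rfl)
  -- Long roots `s(j, j)`: `hrule` over all `i ≠ j, b j`, two short roots.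
  have hL : (Fintype.card I - 2) * ∑ j, r j j ≤ S p + S q := by
    rw [← hS_diag, ← hS_q, ← hS_add]
    exact hS_mono _ _ fun j i h => hrule j i j h.2 h.1.symm (Or.inl (hfix j).symm)
  -- Short roots: `hrule` with `i = j` and with `i = b m`, one long and one short root each.
  have hS2 : 2 * S r ≤ (Fintype.card I - 2) * (∑ j, p j j + ∑ j, q j j) + (S p + S q) := by
    have h1 : S r ≤ (Fintype.card I - 2) * ∑ j, p j j + S q := by
      rw [← hS_diag, ← hS_bar' q, ← hS_add]
      exact hS_mono _ _ fun j m h => hrule j j m (hfix j).symm h.1 (Or.inl h.2)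
    have h2 : S r ≤ S p + (Fintype.card I - 2) * ∑ j, q j j := by
      rw [← hS_diag, ← hS_bar p, ← hS_swap (fun j m => q j j), ← hS_add]
      refine hS_mono _ _ fun j m h => ?_
      have := hrule j (b m) m (fun e => h.1 (b.injective e)) (hfix m).symm (Or.inl h.2)
      rwa [hb] at this
    linarith
  -- Short roots: `hrule` over all `i` outside `{j, b j, m, b m}`, two short roots each.
  have hS4 : (Fintype.card I - 4) * S r ≤ (Fintype.card I - 4) * (S p + S q) := by
    let B : I → I → I → Prop := fun j m i => A j m ∧ A j i ∧ A m i
    let S3 : (I → I → I → ℕ) → ℕ := fun f => ∑ j, ∑ m, ∑ i, if B j m i then f j m i else 0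
    have hS3 : ∀ f : I → I → ℕ, S3 (fun j m _ => f j m) = (Fintype.card I - 4) * S f := by
      intro f
      simp only [S3, S, Finset.mul_sum]
      refine Finset.sum_congr rfl fun j _ => Finset.sum_congr rfl fun m _ => ?_
      by_cases h : A j m
      · simp only [B, h, true_and, ← Finset.sum_filter, Finset.sum_const, hcard4 j m h, smul_eq_mul, if_true]
      · simp [B, h]
    have hp : S3 (fun j m i => p j i) = S3 (fun j m _ => p j m) := by
      simp only [S3]
      refine Finset.sum_congr rfl fun j _ => ?_
      rw [Finset.sum_comm]
      refine Finset.sum_congr rfl fun m _ => Finset.sum_congr rfl fun i _ => ?_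
      have : B j i m ↔ B j m i := by simp only [B, hAs i m]; tauto
      simp only [this]
    have hq : S3 (fun j m i => q (b i) m) = S3 (fun j m _ => q j m) := by
      have e1 : S3 (fun j m i => q (b i) m) = S3 (fun j m i => q i m) := by
        simp only [S3]
        refine Finset.sum_congr rfl fun j _ => Finset.sum_congr rfl fun m _ => ?_
        rw [← Equiv.sum_comp b (fun i => if B j m i then q i m else 0)]
        simp only [B, hAb]
      rw [e1]
      simp only [S3]
      calc _ = ∑ m, ∑ j, ∑ i, (if B j m i then q i m else 0) := Finset.sum_comm
        _ = ∑ m, ∑ i, ∑ j, (if B j m i then q i m else 0) :=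
          Finset.sum_congr rfl fun m _ => Finset.sum_comm
        _ = _ := by
          refine Finset.sum_congr rfl fun m _ => Finset.sum_congr rfl fun i _ =>
            Finset.sum_congr rfl fun j _ => ?_
          have : B j m i ↔ B m i j := by simp only [B, hAs j m, hAs j i]; tauto
          simp only [this, hqs i m]
    rw [mul_add, ← hS3, ← hS3, ← hS3, ← hp, ← hq]
    simp only [S3, ← Finset.sum_add_distrib]
    refine Finset.sum_le_sum fun j _ => Finset.sum_le_sum fun m _ => Finset.sum_le_sum fun i _ => ?_
    by_cases h : B j m i
    · simp only [h, if_true]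
      exact hrule j i m h.2.1.2 (fun e => h.2.2.1 e.symm) (Or.inl h.1.2)
    · simp [h]
  rw [hsplit r, hsplit p, hsplit q]
  by_cases hn : Fintype.card I < 6
  · have : 2 * ∑ j, r j j ≤ (Fintype.card I - 2) * ∑ j, r j j := by gcongr; omega
    have : (Fintype.card I - 2) * (∑ j, p j j + ∑ j, q j j) ≤
       3 * (∑ j, p j j + ∑ j, q j j) := by gcongr; omega
    omega
  · have : S r ≤ S p + S q := Nat.le_of_mul_le_mul_left hS4 (by omega)
    have : 4 * ∑ j, r j j ≤ (Fintype.card I - 2) * ∑ j, r j j := by gcongr; omega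
    omega
end

/-! ### Coordinates on the symplectic Lie algebra -/

section
variable {K : Type*} [Field K] {l : ℕ}
open Matrix LieAlgebra.Symplectic

/-- The sign of the only nonzero entry in each row of `Matrix.J`: row `i` of `J` has the entry
`eps K i` in column `i.swap`. -/
def eps (K : Type*) [Field K] {l : ℕ} : Fin l ⊕ Fin l → K := Sum.elim (fun _ => -1) (fun _ => 1)

theorem eps_ne_zero (i : Fin l ⊕ Fin l) : eps K i ≠ 0 := by cases i <;> simp [eps]
theorem eps_swap (i : Fin l ⊕ Fin l) : eps K i.swap = - eps K i := by cases i <;> simp [eps]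
theorem eps_mul_self (i : Fin l ⊕ Fin l) : eps K i * eps K i = 1 := by cases i <;> simp [eps]

theorem J_mul_apply (x : Matrix (Fin l ⊕ Fin l) (Fin l ⊕ Fin l) K) (i j) :
    (J (Fin l) K * x) i j = eps K i * x i.swap j := by
  cases i <;> simp [Matrix.mul_apply, J, eps, Matrix.one_apply]

theorem mem_sp_iff (x : Matrix (Fin l ⊕ Fin l) (Fin l ⊕ Fin l) K) :
    x ∈ sp (Fin l) K ↔ ∀ i j, (J (Fin l) K * x) i j = (J (Fin l) K * x) j i := by
  have h1 : x ∈ sp (Fin l) K ↔ xᵀ * J (Fin l) K = J (Fin l) K * (-x) := by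
    rw [sp, mem_skewAdjointMatricesLieSubalgebra, mem_skewAdjointMatricesSubmodule]
    rfl
  have h2 : xᵀ * J (Fin l) K = - (J (Fin l) K * x)ᵀ := by
    rw [transpose_mul, J_transpose, mul_neg, neg_neg]
  rw [h1, h2, mul_neg, neg_inj, ← Matrix.ext_iff]
  exact ⟨fun h i j => (h i j).symm, fun h i j => (h i j).symm⟩

/-- The entries of the symmetric matrix `J * x`, as a function on unordered pairs. -/
def coordFun (x : sp (Fin l) K) : Sym2 (Fin l ⊕ Fin l) → K :=
  Sym2.lift ⟨fun i j => (J (Fin l) K * x.1) i j, (mem_sp_iff x.1).1 x.2⟩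

theorem coordFun_mk (x : sp (Fin l) K) (i j) :
    coordFun x s(i, j) = eps K i * x.1 i.swap j := by
  rw [← J_mul_apply]; rfl

/-- The linear coordinates on `sp` given by the entries of the symmetric matrix `J * x`. -/
def coord (K : Type*) [Field K] (l : ℕ) : sp (Fin l) K ≃ₗ[K] (Sym2 (Fin l ⊕ Fin l) → K) where
  toFun := coordFun
  map_add' x y := by
    ext z; induction z with | _ i j
    simp [coordFun_mk, mul_add]
  map_smul' c x := by
    ext z; induction z with | _ i j
    simp [coordFun_mk, mul_left_comm]
  invFun f := ⟨Matrix.of fun i j => - (eps K i * f s(i.swap, j)), by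
    rw [mem_sp_iff]
    intro i j
    simp [J_mul_apply, eps_swap, ← mul_assoc, eps_mul_self, Sym2.eq_swap]⟩
  left_inv x := by
    ext i j
    simp [coordFun_mk, eps_swap, ← mul_assoc, eps_mul_self]
  right_inv f := by
    ext z; induction z with | _ i j
    simp [coordFun_mk, eps_swap, ← mul_assoc, eps_mul_self]

theorem coord_mk (x : sp (Fin l) K) (i j) :
    coord K l x s(i, j) = eps K i * x.1 i.swap j := coordFun_mk x i j

/-- The Poisson bracket of quadratic forms, in coordinates. -/
theorem coord_lie (x y : sp (Fin l) K) (j m) :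
    coord K l ⁅x, y⁆ s(j, m) = - ∑ k, eps K k *
      (coord K l x s(j, k) * coord K l y s(k.swap, m) +
        coord K l x s(m, k) * coord K l y s(k.swap, j)) := by
  have hx : ∀ i j, x.1 i j = - (eps K i * coord K l x s(i.swap, j)) := fun i j => by
    simp [coord_mk, eps_swap, ← mul_assoc, eps_mul_self]
  have hy : ∀ i j, y.1 i j = - (eps K i * coord K l y s(i.swap, j)) := fun i j => by
    simp [coord_mk, eps_swap, ← mul_assoc, eps_mul_self]
  have e1 : coord K l ⁅x, y⁆ s(j, m) = eps K j * ∑ k, x.1 j.swap k * y.1 k m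
      - eps K j * ∑ k, y.1 j.swap k * x.1 k m := by
    rw [coord_mk, ← mul_sub]
    rfl
  have e2 : eps K j * ∑ k, x.1 j.swap k * y.1 k m =
      - ∑ k, eps K k * (coord K l x s(j, k) * coord K l y s(k.swap, m)) := by
    rw [Finset.mul_sum, ← Finset.sum_neg_distrib]
    refine Finset.sum_congr rfl fun k _ => ?_
    rw [coord_mk x, hy]; ring
  have e3 : eps K j * ∑ k, y.1 j.swap k * x.1 k m =
      ∑ k, eps K k * (coord K l x s(m, k) * coord K l y s(k.swap, j)) := by
    rw [Finset.mul_sum, ← Equiv.sum_comp (Equiv.sumComm _ _)]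
    refine Finset.sum_congr rfl fun k _ => ?_
    rw [Equiv.sumComm_apply, hx, Sym2.eq_swap (a := k.swap), coord_mk y, Sym2.eq_swap (a := m),
      eps_swap, Sum.swap_swap]; ring
  rw [e1, e2, e3]
  simp only [mul_add, Finset.sum_add_distrib]
  ring

/-- The weights of the natural representation: `ε_i` for `inl i` and `-ε_i` for `inr i`, in `ℤ^l`
with the lexicographic order. -/
noncomputable def wt : Fin l ⊕ Fin l → Lex (Fin l → ℤ) :=
  Sum.elim (fun i => toLex (Pi.single i 1)) (fun i => - toLex (Pi.single i 1))

theorem wt_inl_apply (i k : Fin l) : ofLex (wt (Sum.inl i)) k = if k = i then 1 else 0 :=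
  Pi.single_apply i (1 : ℤ) k

theorem wt_inr_apply (i k : Fin l) : ofLex (wt (Sum.inr i)) k = - if k = i then 1 else 0 :=
  congrArg Neg.neg (Pi.single_apply i (1 : ℤ) k)

theorem wt_swap (i : Fin l ⊕ Fin l) : wt i.swap = - wt i := by cases i <;> simp [wt]

/-- The weight of the basis vector at `s(i, j)`, a root unless `j = i.swap`. -/
noncomputable def deg : Sym2 (Fin l ⊕ Fin l) → Lex (Fin l → ℤ) :=
  Sym2.lift ⟨fun i j => wt i + wt j, fun _ _ => add_comm _ _⟩

theorem deg_mk (i j : Fin l ⊕ Fin l) : deg s(i, j) = wt i + wt j := rfl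

/-- A root determines its index, i.e. root spaces are one-dimensional. -/
theorem deg_unique (i j p q : Fin l ⊕ Fin l) (hij : j ≠ i.swap)
    (h : deg s(p, q) = deg s(i, j)) : s(p, q) = s(i, j) := by
  rw [deg_mk, deg_mk] at h
  have h' : ∀ k, ofLex (wt p) k + ofLex (wt q) k = ofLex (wt i) k + ofLex (wt j) k :=
    fun k => congrFun (congrArg ofLex h) k
  rw [Sym2.eq_iff]
  rcases i with i | i <;> rcases j with j | j <;> rcases p with p | p <;> rcases q with q | q <;>
    (have h1 := h' i
     have h2 := h' j
     clear h h'
     simp only [wt_inl_apply, wt_inr_apply] at h1 h2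
     simp only [Sum.swap_inl, Sum.swap_inr, ne_eq, Sum.inl.injEq, Sum.inr.injEq, reduceCtorEq,
       not_false_eq_true, false_and, and_false, or_false, false_or] at hij ⊢
     grind)

/-- Leading roots of `U` and `V` bracket to a leading index of `[U, V]`. The leading coefficient is,
up to sign, the product of the given ones, doubled when `m = j`. -/
theorem isLead_lie (h2 : (2 : K) ≠ 0) {U V : Submodule K (sp (Fin l) K)} {j i m : Fin l ⊕ Fin l}
    (hij : i ≠ j.swap) (hmi : m ≠ i) (hmj : m ≠ j.swap ∨ i = j)
    (hU : IsLead (coord K l) deg U s(j, i)) (hV : IsLead (coord K l) deg V s(i.swap, m)) :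
    IsLead (coord K l) deg (bracketSpan U V) s(j, m) := by
  obtain ⟨u, huU, hu, hu0⟩ := hU
  obtain ⟨v, hvV, hv, hv0⟩ := hV
  -- In degrees at least `deg s(j, m)` only the product of the two leading coordinates survives.
  have hterm : ∀ p q k, deg s(j, m) ≤ deg s(p, q) →
      ¬ (s(p, k) = s(j, i) ∧ s(k.swap, q) = s(i.swap, m)) →
      coord K l u s(p, k) * coord K l v s(k.swap, q) = 0 := by
    intro p q k hd hne
    by_contra hnz
    rw [mul_eq_zero, not_or] at hnz
    have h1 : s(p, k) ≠ s(j, i) → deg s(p, k) < deg s(j, i) := fun h => by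
      by_contra hle
      exact hnz.1 (hu0 _ (not_lt.1 hle) h)
    have h2 : s(k.swap, q) ≠ s(i.swap, m) → deg s(k.swap, q) < deg s(i.swap, m) := fun h => by
      by_contra hle
      exact hnz.2 (hv0 _ (not_lt.1 hle) h)
    have e1 : deg s(p, q) = deg s(p, k) + deg s(k.swap, q) := by
      simp only [deg_mk, wt_swap]; abel
    have e2 : deg s(j, m) = deg s(j, i) + deg s(i.swap, m) := by
      simp only [deg_mk, wt_swap]; abel
    rw [e1, e2] at hd
    refine hd.not_gt ?_
    by_cases ha : s(p, k) = s(j, i)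
    · by_cases hb : s(k.swap, q) = s(i.swap, m)
      · exact absurd ⟨ha, hb⟩ hne
      · rw [ha]; exact add_lt_add_right (h2 hb) _
    · by_cases hb : s(k.swap, q) = s(i.swap, m)
      · rw [hb]; exact add_lt_add_left (h1 ha) _
      · exact add_lt_add (h1 ha) (h2 hb)
  have hsw : ∀ x y : Fin l ⊕ Fin l, x.swap = y.swap → x = y := fun x y h => by
    simpa using congrArg Sum.swap h
  have hss : ∀ x : Fin l ⊕ Fin l, x.swap.swap = x := Sum.swap_swap
  have hfx : ∀ x : Fin l ⊕ Fin l, x.swap ≠ x := fun x => by cases x <;> simp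
  refine ⟨⁅u, v⁆, Submodule.subset_span ⟨u, huU, v, hvV, rfl⟩, ?_, ?_⟩
  · rw [coord_lie]
    have hk : ∀ k, k ≠ i →
        coord K l u s(j, k) * coord K l v s(k.swap, m) +
          coord K l u s(m, k) * coord K l v s(k.swap, j) = 0 := by
      intro k hki
      rw [hterm j m k le_rfl, hterm m j k (by rw [Sym2.eq_swap]), add_zero]
      · simp only [Sym2.eq_iff]; grind
      · simp only [Sym2.eq_iff]; grind
    rw [Finset.sum_eq_single i (fun k _ hki => by rw [hk k hki, mul_zero]) (by simp)]
    refine neg_ne_zero.2 (mul_ne_zero (eps_ne_zero i) ?_)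
    by_cases hjm : m = j
    · subst hjm
      rw [← two_mul]
      exact mul_ne_zero h2 (mul_ne_zero hu hv)
    · rw [hterm m j i (by rw [Sym2.eq_swap]), add_zero]
      · exact mul_ne_zero hu hv
      · simp only [Sym2.eq_iff]; grind
  · intro s hs hne
    induction s with | _ p q
    rw [coord_lie, Finset.sum_eq_zero, neg_zero]
    intro k _
    rw [hterm p q k hs, hterm q p k (by rwa [Sym2.eq_swap (a := q)]), add_zero, mul_zero]
    · simp only [Sym2.eq_iff, ne_eq] at hne ⊢; grind
    · simp only [Sym2.eq_iff, ne_eq] at hne ⊢; grind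

end

/-! ### The codimension bound -/

theorem stmt4 (K : Type*) [Field K] (l : ℕ) (hl : 2 ≤ l)
    (hchar : ringChar K = 0 ∨ (Nat.Prime (ringChar K) ∧ ringChar K ≠ 2))
    (U V : Submodule K ↥(LieAlgebra.Symplectic.sp (Fin l) K)) :
    2 * codim K (bracketSpan U V) ≤ 3 * (codim K U + codim K V) := by
  classical
  have h2 : (2 : K) ≠ 0 := Ring.two_ne_zero (by rcases hchar with h | h <;> simp [h])
  let Root : Sym2 (Fin l ⊕ Fin l) → Prop := fun z => ∀ i, z ≠ s(i, i.swap)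
  have hroot : ∀ i j : Fin l ⊕ Fin l, j ≠ i.swap → Root s(i, j) := by
    intro i j h k hk
    rw [Sym2.eq_iff] at hk
    rcases hk with ⟨rfl, rfl⟩ | ⟨rfl, rfl⟩
    · exact h rfl
    · exact h (Sum.swap_swap _).symm
  let e := coord K l
  let nonlead : Submodule K (LieAlgebra.Symplectic.sp (Fin l) K) → Finset (Sym2 (Fin l ⊕ Fin l)) :=
    fun W => Finset.univ.filter fun z => Root z ∧ ¬ IsLead e deg W z
  let R := Finset.univ.filter fun z => ¬ IsLead e deg (bracketSpan U V) z
  have hdim : Module.finrank K (LieAlgebra.Symplectic.sp (Fin l) K) =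
      Fintype.card (Sym2 (Fin l ⊕ Fin l)) := by
    rw [e.finrank_eq, Module.finrank_fintype_fun_eq_card]
  have hlow : ∀ W, (nonlead W).card ≤ codim K W := by
    intro W
    have := finrank_add_card_le e deg W (nonlead W)
      (fun t ht => (Finset.mem_filter.1 ht).2.2) (by
        intro t ht s hs
        have hr := (Finset.mem_filter.1 ht).2.1
        induction t with | _ i j
        induction s with | _ p q
        exact deg_unique i j p q (fun h => hr i (by rw [h])) hs)
    rw [codim, hdim]
    omega
  have hup : codim K (bracketSpan U V) ≤ R.card := by
    have h := card_le_finrank e deg (bracketSpan U V) Rᶜ (fun t ht => by simpa [R] using ht)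
    rw [Finset.card_compl] at h
    rw [codim, hdim]
    omega
  have hcount : ∀ S : Finset (Sym2 (Fin l ⊕ Fin l)), 2 * S.card =
      ∑ j, ∑ m, (if s(j, m) ∈ S then 1 else 0) + ∑ j, (if s(j, j) ∈ S then 1 else 0) := by
    intro S
    rw [← two_mul_sum_sym2 (fun z => if z ∈ S then 1 else 0)]
    simp
  have key := counting (Equiv.sumComm (Fin l) (Fin l)) (fun i => by simp) (fun i => by cases i <;> simp)
    (by simp; omega)
    (fun j m => if s(j, m) ∈ nonlead U then 1 else 0)
    (fun j m => if s(j, m) ∈ nonlead V then 1 else 0)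
    (fun j m => if s(j, m) ∈ R then 1 else 0)
    (fun i j => by simp only [Sym2.eq_swap])
    (by
      intro j i m hij hmi hmj
      simp only [Equiv.sumComm_apply] at hij hmj ⊢
      by_contra hlt
      have hR : s(j, m) ∈ R := by by_contra h; simp [h] at hlt
      have hU : s(j, i) ∉ nonlead U := by intro h; simp [h, hR] at hlt
      have hV : s(i.swap, m) ∉ nonlead V := by intro h; simp [h, hR] at hlt
      have hU' : IsLead e deg U s(j, i) := by
        by_contra h
        exact hU (Finset.mem_filter.2 ⟨Finset.mem_univ _, hroot _ _ hij, h⟩)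
      have hV' : IsLead e deg V s(i.swap, m) := by
        by_contra h
        exact hV (Finset.mem_filter.2 ⟨Finset.mem_univ _, hroot _ _ (by simpa using hmi), h⟩)
      exact (Finset.mem_filter.1 hR).2 (isLead_lie h2 hij hmi hmj hU' hV'))
  rw [← hcount, ← hcount, ← hcount] at key
  have := hlow U
  have := hlow V
  omega
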